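/- Let X and Y be real Banach spaces, let k ≥ 1 be an integer and let P : X → Y be a continuous k-homogeneous polynomial. The following assertions are equivalent: (A) for every w.u.C. series ∑ xₙ in X, if for every bounded sequence (aₙ) in c₀ the set {P(∑_{i=1}^∞ aₙ(i)·x_i) : n ∈ ℕ} is relatively weakly compact in Y, then ∑ xₙ is unconditionally convergent; (B) for every w.u.C. series ∑ xₙ in X, if for every bounded sequence (aₙ) in c₀ the set {P(∑_{i=1}^∞ aₙ(i)·x_i) : n ∈ ℕ} is relatively (norm) compact in Y, then ∑ xₙ is unconditionally convergent; (C) for every sequence (xₙ) in X equivalent to the c₀-basis there is a bounded sequence (aₙ) in c₀ such that the set {P(∑_{i=1}^∞ aₙ(i)·x_i) : n ∈ ℕ} is not relatively weakly compact; (D) for every sequence (xₙ) in X equivalent to the c₀-basis there is a bounded sequence (aₙ) in c₀ such that the set {P(∑_{i=1}^∞ aₙ(i)·x_i) : n ∈ ℕ} is not relatively (norm) compact; (E) for every real Banach space Z and every bounded linear operator T : Z → X, if the polynomial P∘T is unconditionally converging then T is an unconditionally converging operator; (F) for every bounded linear operator T : c₀ → X, if the polynomial P∘T is compact then T is a compact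 operator; (G) for every closed subspace M ⊆ X containing a subspace isomorphic to c₀, the restriction of P to M is not an unconditionally converging polynomial; (H) for every closed subspace M ⊆ X isomorphic to c₀, the restriction of P to M is not a compact polynomial. -/

import Mathlib

open Filter Topology Metric

noncomputable section

/-- The Banach space `c₀` of real sequences converging to zero, with the sup norm. -/
abbrev c0 : Type := ZeroAtInftyContinuousMap ℕ ℝ

/-- The unit vector basis of `c₀`. -/
def e (n : ℕ) : c0 :=
  { toFun := fun i => if i = n then (1 : ℝ) else 0
    continuous_toFun := continuous_of_discreteTopology
    zero_at_infty' := by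
      rw [Filter.cocompact_eq_cofinite]
      refine tendsto_const_nhds.congr' ?_
      have h : {n}ᶜ ∈ (Filter.cofinite : Filter ℕ) := by simp [Filter.cofinite]
      filter_upwards [h] with i hi
      simp only [Set.mem_compl_iff, Set.mem_singleton_iff] at hi
      simp [hi] }

/-- A series `∑ xₙ` is weakly unconditionally Cauchy (w.u.C.) if `∑ |φ (xₙ)| < ∞` for every
continuous linear functional `φ`. -/
def WUC {X : Type*} [NormedAddCommGroup X] [NormedSpace ℝ X] (x : ℕ → X) : Prop :=
  ∀ φ : X →L[ℝ] ℝ, Summable fun n => |φ (x n)|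

/-- A sequence is equivalent to the unit vector basis of `c₀`: there are `0 < c ≤ C` with
`c · maxᵢ |aᵢ| ≤ ‖∑ aᵢ xᵢ‖ ≤ C · maxᵢ |aᵢ|` for all finite scalar families. -/
def IsEquivC0Basis {X : Type*} [NormedAddCommGroup X] [NormedSpace ℝ X] (x : ℕ → X) : Prop :=
  ∃ c C : ℝ, 0 < c ∧ c ≤ C ∧ ∀ (n : ℕ) (a : ℕ → ℝ),
    c * (⨆ i : Fin n, |a i|) ≤ ‖∑ i ∈ Finset.range n, a i • x i‖ ∧
    ‖∑ i ∈ Finset.range n, a i • x i‖ ≤ C * (⨆ i : Fin n, |a i|)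

/-- A map (polynomial) is unconditionally converging if for every w.u.C. series `∑ xₙ` the
sequence of values at the partial sums converges in norm. -/
def UCPoly {X Y : Type*} [NormedAddCommGroup X] [NormedSpace ℝ X]
    [NormedAddCommGroup Y] [NormedSpace ℝ Y] (P : X → Y) : Prop :=
  ∀ x : ℕ → X, WUC x →
    ∃ L : Y, Tendsto (fun n => P (∑ i ∈ Finset.range n, x i)) atTop (𝓝 L)

/-- An operator is unconditionally converging if it maps w.u.C. series to unconditionally
convergent series. -/
def UCOp {X Y : Type*} [NormedAddCommGroup X] [NormedSpace ℝ X]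
    [NormedAddCommGroup Y] [NormedSpace ℝ Y] (T : X → Y) : Prop :=
  ∀ x : ℕ → X, WUC x → Summable fun n => T (x n)

/-- A map (polynomial or operator) is compact if the image of the closed unit ball is
relatively norm compact. -/
def CompactMap {X Y : Type*} [NormedAddCommGroup X] [NormedSpace ℝ X]
    [NormedAddCommGroup Y] [NormedSpace ℝ Y] (P : X → Y) : Prop :=
  IsCompact (closure (P '' Metric.closedBall 0 1))

/-- A set is relatively weakly compact if its closure in the weak topology is compact. -/
def RelWeakCompact {Y : Type*} [NormedAddCommGroup Y] [NormedSpace ℝ Y] (s : Set Y) : Prop :=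
  IsCompact (closure ((toWeakSpace ℝ Y) '' s))

/-- A WUC-set is the image of the closed unit ball of `c₀` under a bounded operator. -/
def IsWUCSet {X : Type*} [NormedAddCommGroup X] [NormedSpace ℝ X] (s : Set X) : Prop :=
  ∃ T : c0 →L[ℝ] X, s = ⇑T '' Metric.closedBall 0 1

theorem c0_norm_le {a : c0} {C : ℝ} (hC : 0 ≤ C) : ‖a‖ ≤ C ↔ ∀ t, |a t| ≤ C := by
  rw [← ZeroAtInftyContinuousMap.norm_toBCF_eq_norm, BoundedContinuousFunction.norm_le hC]
  rfl

theorem c0_abs_le (a : c0) (t : ℕ) : |a t| ≤ ‖a‖ := (c0_norm_le (norm_nonneg a)).1 le_rfl t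

/-- Evaluation functional on `c0`. -/
def c0eval (t : ℕ) : c0 →L[ℝ] ℝ :=
  LinearMap.mkContinuous
    { toFun := fun a => a t
      map_add' := fun _ _ => rfl
      map_smul' := fun _ _ => rfl } 1 (fun a => by
        rw [one_mul]; exact c0_abs_le a t)

theorem c0eval_apply (t : ℕ) (a : c0) : c0eval t a = a t := rfl

theorem c0_sum_apply {ι : Type*} (F : Finset ι) (z : ι → c0) (t : ℕ) :
    (∑ i ∈ F, z i) t = ∑ i ∈ F, z i t := by
  exact map_sum (c0eval t) z F

theorem c0_small (a : c0) {ε : ℝ} (hε : 0 < ε) : ∃ s : Finset ℕ, ∀ t ∉ s, |a t| < ε := by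
  have h := a.zero_at_infty'
  rw [Filter.cocompact_eq_cofinite] at h
  have h2 := (Metric.tendsto_nhds.1 h ε hε)
  rw [Filter.eventually_cofinite] at h2
  refine ⟨h2.toFinset, fun t ht => ?_⟩
  simp only [Set.Finite.mem_toFinset, Set.mem_ofPred_eq, not_not, dist_zero_right] at ht
  exact ht

theorem e_apply (n t : ℕ) : e n t = if t = n then 1 else 0 := rfl

section WUCbasic
variable {X : Type*} [NormedAddCommGroup X] [NormedSpace ℝ X]

theorem norm_le_of_dual {y : X} {C : ℝ}
    (h : ∀ φ : X →L[ℝ] ℝ, ‖φ‖ ≤ 1 → |φ y| ≤ C) : ‖y‖ ≤ C := by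
  obtain ⟨g, hg, hgy⟩ := exists_dual_vector'' ℝ y
  have := h g hg
  rw [hgy] at this
  simpa using this

theorem WUC.bound {x : ℕ → X} (hx : WUC x) :
    ∃ C : ℝ, 0 ≤ C ∧ ∀ (φ : X →L[ℝ] ℝ) (F : Finset ℕ), ∑ i ∈ F, |φ (x i)| ≤ C * ‖φ‖ := by
  -- family indexed by `(F, signs)`
  let g : (Finset ℕ × (ℕ → Bool)) → (X →L[ℝ] ℝ) →L[ℝ] ℝ := fun p =>
    NormedSpace.inclusionInDoubleDual ℝ X (∑ i ∈ p.1, (if p.2 i then (1 : ℝ) else -1) • x i)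
  have hg : ∀ p φ, g p φ = ∑ i ∈ p.1, (if p.2 i then (1 : ℝ) else -1) * φ (x i) := by
    intro p φ
    change φ (∑ i ∈ p.1, (if p.2 i then (1 : ℝ) else -1) • x i) = _
    simp only [map_sum, map_smul, smul_eq_mul]
  obtain ⟨C, hC⟩ := banach_steinhaus (g := g) (fun φ => by
    refine ⟨∑' i, |φ (x i)|, fun p => ?_⟩
    rw [hg]
    refine (norm_sum_le _ _).trans ?_
    refine le_trans ?_ ((hx φ).sum_le_tsum p.1 (fun i _ => abs_nonneg _))
    refine Finset.sum_le_sum fun i _ => ?_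
    rw [norm_mul]
    split_ifs <;> simp)
  refine ⟨max C 0, le_max_right _ _, fun φ F => ?_⟩
  classical
  have h1 := (g (F, fun i => decide (0 ≤ φ (x i)))).le_opNorm φ
  rw [hg] at h1
  have h2 : ∑ i ∈ F, |φ (x i)| =
      ∑ i ∈ F, (if (decide (0 ≤ φ (x i))) = true then (1 : ℝ) else -1) * φ (x i) := by
    refine Finset.sum_congr rfl fun i _ => ?_
    by_cases h : 0 ≤ φ (x i)
    · simp [h, abs_of_nonneg h]
    · simp [h, abs_of_neg (not_le.1 h)]
  rw [h2]
  refine (le_abs_self _).trans (h1.trans ?_)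
  gcongr
  exact (hC _).trans (le_max_left _ _)

theorem norm_sum_le_of_bound {x : ℕ → X} {C : ℝ}
    (hC : ∀ (φ : X →L[ℝ] ℝ) (F : Finset ℕ), ∑ i ∈ F, |φ (x i)| ≤ C * ‖φ‖) (hC0 : 0 ≤ C)
    (F : Finset ℕ) (a : ℕ → ℝ) {M : ℝ} (hM : 0 ≤ M) (ha : ∀ i ∈ F, |a i| ≤ M) :
    ‖∑ i ∈ F, a i • x i‖ ≤ C * M := by
  refine norm_le_of_dual fun φ hφ => ?_
  rw [map_sum]
  refine (Finset.abs_sum_le_sum_abs _ _).trans ?_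
  calc ∑ i ∈ F, |φ (a i • x i)| ≤ ∑ i ∈ F, M * |φ (x i)| := by
        refine Finset.sum_le_sum fun i hi => ?_
        rw [map_smul, smul_eq_mul, abs_mul]
        gcongr
        exact ha i hi
    _ = M * ∑ i ∈ F, |φ (x i)| := by rw [Finset.mul_sum]
    _ ≤ M * (C * 1) := by
        gcongr
        exact (hC φ F).trans (by gcongr)
    _ = C * M := by ring

theorem WUC.of_bound {x : ℕ → X} (C : ℝ) (hC : ∀ F : Finset ℕ, ‖∑ i ∈ F, x i‖ ≤ C) :
    WUC x := by
  intro φ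
  refine summable_of_sum_le (c := 2 * (‖φ‖ * C)) (fun i => abs_nonneg _) fun F => ?_
  have key : ∀ G : Finset ℕ, |∑ i ∈ G, φ (x i)| ≤ ‖φ‖ * C := fun G => by
    rw [← map_sum]
    refine (φ.le_opNorm _).trans ?_
    gcongr
    exact hC G
  rw [← Finset.sum_filter_add_sum_filter_not F (fun i => 0 ≤ φ (x i))]
  have h1 : ∑ i ∈ F with 0 ≤ φ (x i), |φ (x i)| ≤ ‖φ‖ * C := by
    refine le_trans (le_of_eq ?_) ((le_abs_self _).trans (key (F.filter fun i => 0 ≤ φ (x i))))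
    refine Finset.sum_congr rfl fun i hi => abs_of_nonneg (Finset.mem_filter.1 hi).2
  have h2 : ∑ i ∈ F with ¬ 0 ≤ φ (x i), |φ (x i)| ≤ ‖φ‖ * C := by
    refine le_trans (le_of_eq ?_) ((neg_le_abs _).trans (key (F.filter fun i => ¬ 0 ≤ φ (x i))))
    rw [← Finset.sum_neg_distrib]
    refine Finset.sum_congr rfl fun i hi => abs_of_neg (not_le.1 (Finset.mem_filter.1 hi).2)
  linarith

theorem WUC.map {X' : Type*} [NormedAddCommGroup X'] [NormedSpace ℝ X'] {x : ℕ → X}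
    (hx : WUC x) (T : X →L[ℝ] X') : WUC fun n => T (x n) :=
  fun φ => hx (φ.comp T)

theorem WUC.comp_inj {x : ℕ → X} (hx : WUC x) {f : ℕ → ℕ} (hf : Function.Injective f) :
    WUC fun n => x (f n) :=
  fun φ => (hx φ).comp_injective hf

theorem WUC.summable_smul [CompleteSpace X] {x : ℕ → X} (hx : WUC x) (a : c0) :
    Summable fun i => a i • x i := by
  obtain ⟨C, hC0, hC⟩ := hx.bound
  rw [summable_iff_vanishing_norm]
  intro ε hε
  obtain ⟨s, hs⟩ := c0_small a (ε := ε / (C + 1)) (by positivity)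
  refine ⟨s, fun t ht => ?_⟩
  have := norm_sum_le_of_bound hC hC0 t a (M := ε / (C + 1)) (by positivity)
    (fun i hi => (hs i (Finset.disjoint_left.1 ht hi)).le)
  refine this.trans_lt ?_
  rw [mul_div_assoc', div_lt_iff₀ (by positivity)]
  nlinarith

/-- The operator `c0 → X` associated with a w.u.C. series. -/
def opc0 [CompleteSpace X] (x : ℕ → X) (hx : WUC x) : c0 →L[ℝ] X :=
  LinearMap.mkContinuous
    { toFun := fun a => ∑' i, a i • x i
      map_add' := fun a b => by
        rw [← (hx.summable_smul a).tsum_add (hx.summable_smul b)]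
        refine tsum_congr fun i => ?_
        rw [ZeroAtInftyContinuousMap.add_apply, add_smul]
      map_smul' := fun r a => by
        simp only [RingHom.id_apply]
        rw [← (hx.summable_smul a).tsum_const_smul]
        refine tsum_congr fun i => ?_
        rw [ZeroAtInftyContinuousMap.smul_apply, smul_assoc] }
    hx.bound.choose (fun a => by
      have h := hx.bound.choose_spec
      refine le_of_tendsto (hx.summable_smul a).hasSum.norm (Eventually.of_forall fun F => ?_)
      exact norm_sum_le_of_bound h.2 h.1 F a (norm_nonneg a) (fun i _ => c0_abs_le a i))

theorem opc0_apply [CompleteSpace X] (x : ℕ → X) (hx : WUC x) (a : c0) :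
    opc0 x hx a = ∑' i, a i • x i := rfl

theorem opc0_e [CompleteSpace X] (x : ℕ → X) (hx : WUC x) (n : ℕ) :
    opc0 x hx (e n) = x n := by
  rw [opc0_apply, tsum_eq_single n]
  · simp [e_apply]
  · intro m hm
    simp [e_apply, hm]

end WUCbasic

theorem WUC.of_coord {z : ℕ → c0} (C : ℝ)
    (hC : ∀ (t : ℕ) (F : Finset ℕ), ∑ i ∈ F, |z i t| ≤ C) : WUC z := by
  have hC0 : 0 ≤ C := by simpa using hC 0 ∅
  refine WUC.of_bound C fun F => (c0_norm_le hC0).2 fun t => ?_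
  rw [c0_sum_apply]
  exact (Finset.abs_sum_le_sum_abs _ _).trans (hC t F)

theorem WUC.coord {z : ℕ → c0} (hz : WUC z) :
    ∃ C : ℝ, 0 ≤ C ∧ ∀ (t : ℕ) (F : Finset ℕ), ∑ i ∈ F, |z i t| ≤ C := by
  obtain ⟨C, hC0, hC⟩ := hz.bound
  refine ⟨C, hC0, fun t F => (hC (c0eval t) F).trans ?_⟩
  have : ‖c0eval t‖ ≤ 1 := LinearMap.mkContinuous_norm_le _ zero_le_one _
  nlinarith

theorem wuc_e : WUC e := by
  refine WUC.of_coord 1 fun t F => ?_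
  have : ∀ i, |e i t| = if t = i then 1 else 0 := fun i => by
    rw [e_apply]; split_ifs <;> simp
  simp_rw [this]
  rw [Finset.sum_ite_eq]
  split_ifs <;> norm_num

theorem c0_hasSum (a : c0) : HasSum (fun i => a i • e i) a := by
  have h := (wuc_e.summable_smul a).hasSum
  suffices hh : a = ∑' i, a i • e i by
    rw [← hh] at h
    exact h
  refine DFunLike.ext _ _ fun t => ?_
  have h2 := (c0eval t).hasSum h
  refine HasSum.unique ?_ h2
  have h3 := hasSum_single (f := fun i => c0eval t (a i • e i)) t (fun i hi => by
    simp [c0eval_apply, e_apply, hi.symm])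
  simpa [c0eval_apply, e_apply] using h3

theorem clm_c0_apply {X : Type*} [NormedAddCommGroup X] [NormedSpace ℝ X] (T : c0 →L[ℝ] X)
    (a : c0) : T a = ∑' i, a i • T (e i) := by
  have h := T.hasSum (c0_hasSum a)
  simp only [map_smul] at h
  exact h.tsum_eq.symm

theorem c0_ext_clm {X : Type*} [NormedAddCommGroup X] [NormedSpace ℝ X] {S T : c0 →L[ℝ] X}
    (h : ∀ i, S (e i) = T (e i)) : S = T := by
  ext a
  rw [clm_c0_apply S, clm_c0_apply T]
  simp_rw [h]

theorem rosenthal_aux (δ : ENNReal) (hδ : δ ≠ ⊤) (K : ℕ) : ∀ (a : ℕ → ℕ → ENNReal),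
    (∀ n, ∑' m, a n m ≤ K * δ) →
    ∃ f : ℕ → ℕ, Function.Injective f ∧
      ∀ n, ∑' m, (if m = n then 0 else a (f n) (f m)) ≤ δ := by
  induction K with
  | zero =>
    intro a h
    refine ⟨id, Function.injective_id, fun n => ?_⟩
    refine le_trans (ENNReal.tsum_le_tsum fun m => ?_) ((h n).trans (by simp))
    split_ifs <;> simp
  | succ K ih =>
    intro a h
    by_cases hp : ∃ p : ℕ, ∀ q, ∑' q', (if q' = q then 0 else a (Nat.pair p q) (Nat.pair p q')) ≤ δ
    · obtain ⟨p, hp⟩ := hp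
      refine ⟨fun q => Nat.pair p q, fun q q' hq => ?_, hp⟩
      have := congrArg Nat.unpair hq
      simpa using this
    · push Not at hp
      choose q hq using hp
      let k : ℕ → ℕ := fun p => Nat.pair p (q p)
      have hk : Function.Injective k := fun p p' hpp => by
        have := congrArg (fun z => (Nat.unpair z).1) hpp
        simpa [k] using this
      obtain ⟨f, hf, hfs⟩ := ih (fun n m => a (k n) (k m)) (fun p => by
        have h1 := h (k p)
        have h2 : ∑' j, a (k p) j = ∑' r, ∑' q', a (k p) (Nat.pair r q') := by
          rw [← ENNReal.tsum_prod]
          exact (Nat.pairEquiv.tsum_eq (fun j => a (k p) j)).symm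
        have h3 : ∑' r, (a (k p) (k r) + if r = p then δ else 0)
            ≤ ∑' r, ∑' q', a (k p) (Nat.pair r q') := by
          refine ENNReal.tsum_le_tsum fun r => ?_
          by_cases hr : r = p
          · subst hr
            rw [if_pos rfl, ENNReal.tsum_eq_add_tsum_ite (q r)]
            gcongr
            convert (hq r).le
          · rw [if_neg hr, add_zero]
            exact ENNReal.le_tsum (f := fun q' => a (k p) (Nat.pair r q')) (q r)
        rw [ENNReal.tsum_add, tsum_ite_eq] at h3
        have h4 := (h3.trans (h2 ▸ h1))
        push_cast at h4
        rw [add_mul, one_mul] at h4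
        exact ENNReal.le_of_add_le_add_right hδ h4)
      exact ⟨k ∘ f, hk.comp hf, hfs⟩

theorem rosenthal (δ : ENNReal) (hδ : δ ≠ ⊤) (K : ℕ) (a : ℕ → ℕ → ENNReal)
    (h : ∀ n, ∑' m, a n m ≤ K * δ) :
    ∃ f : ℕ → ℕ, StrictMono f ∧
      ∀ n, ∑' m, (if m = n then 0 else a (f n) (f m)) ≤ δ := by
  obtain ⟨f, hf, hfs⟩ := rosenthal_aux δ hδ K a h
  obtain ⟨g, hg, hfg⟩ := strictMono_subseq_of_tendsto_atTop hf.nat_tendsto_atTop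
  refine ⟨f ∘ g, hfg, fun n => le_trans ?_ (hfs (g n))⟩
  refine le_trans (le_of_eq ?_) (ENNReal.tsum_comp_le_tsum_of_injective hg.injective
    (fun m => if m = g n then 0 else a (f (g n)) (f m)))
  refine tsum_congr fun m => ?_
  simp [hg.injective.eq_iff]

theorem bessaga_pelczynski {X : Type*} [NormedAddCommGroup X] [NormedSpace ℝ X] [CompleteSpace X]
    {y : ℕ → X} (hy : WUC y) {ε : ℝ} (hε : 0 < ε) (hyε : ∀ n, ε ≤ ‖y n‖) :
    ∃ f : ℕ → ℕ, StrictMono f ∧ ∀ (h : WUC fun n => y (f n)) (a : c0),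
      ε / 2 * ‖a‖ ≤ ‖opc0 _ h a‖ := by
  obtain ⟨C, hC0, hC⟩ := hy.bound
  choose φ hφ1 hφ2 using fun n => exists_dual_vector'' ℝ (y n)
  obtain ⟨K, hK⟩ := exists_nat_ge (C / (ε / 2))
  rw [div_le_iff₀ (by positivity)] at hK
  obtain ⟨f, hf, hfs⟩ := rosenthal (ENNReal.ofReal (ε / 2)) ENNReal.ofReal_ne_top K
    (fun n m => ENNReal.ofReal |φ n (y m)|) (fun n => by
      rw [ENNReal.tsum_eq_iSup_sum]
      refine iSup_le fun F => ?_
      rw [← ENNReal.ofReal_sum_of_nonneg (fun _ _ => abs_nonneg _), ← ENNReal.ofReal_natCast,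
        ← ENNReal.ofReal_mul (by positivity)]
      refine ENNReal.ofReal_le_ofReal (le_trans ((hC (φ n) F).trans ?_) hK)
      nlinarith [hφ1 n, norm_nonneg (φ n)])
  refine ⟨f, hf, fun h a => ?_⟩
  have hoff : ∀ n (F : Finset ℕ), n ∉ F → ∑ m ∈ F, |φ (f n) (y (f m))| ≤ ε / 2 := by
    intro n F hn
    have h1 := (ENNReal.sum_le_tsum F).trans (hfs n)
    have h2 : ∑ m ∈ F, (if m = n then 0 else ENNReal.ofReal |φ (f n) (y (f m))|)
        = ENNReal.ofReal (∑ m ∈ F, |φ (f n) (y (f m))|) := by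
      rw [ENNReal.ofReal_sum_of_nonneg (fun _ _ => abs_nonneg _)]
      refine Finset.sum_congr rfl fun m hm => if_neg ?_
      rintro rfl
      exact hn hm
    rw [h2] at h1
    exact (ENNReal.ofReal_le_ofReal_iff (by positivity)).1 h1
  have key : ∀ n, |a n| * ε ≤ ‖opc0 _ h a‖ + ε / 2 * ‖a‖ := by
    intro n
    have hs := (φ (f n)).hasSum (h.summable_smul a).hasSum
    have h1 : |a n| * ε - ε / 2 * ‖a‖ ≤ ‖φ (f n) (opc0 _ h a)‖ := by
      refine ge_of_tendsto hs.norm ?_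
      simp only [SummationFilter.unconditional_filter]
      filter_upwards [Filter.eventually_ge_atTop {n}] with F hF
      have hn : n ∈ F := hF (Finset.mem_singleton_self n)
      rw [← Finset.add_sum_erase F _ hn]
      have h2 : ‖∑ m ∈ F.erase n, (φ (f n)) (a m • y (f m))‖ ≤ ε / 2 * ‖a‖ := by
        refine (norm_sum_le _ _).trans ?_
        calc ∑ m ∈ F.erase n, ‖(φ (f n)) (a m • y (f m))‖
            ≤ ∑ m ∈ F.erase n, |φ (f n) (y (f m))| * ‖a‖ := by
              refine Finset.sum_le_sum fun m _ => ?_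
              rw [map_smul, norm_smul, mul_comm]
              exact mul_le_mul_of_nonneg_left (c0_abs_le a m) (abs_nonneg _)
          _ ≤ ε / 2 * ‖a‖ := by
              rw [← Finset.sum_mul]
              gcongr
              exact hoff n _ (by simp)
      have h3 : |a n| * ε ≤ ‖(φ (f n)) (a n • y (f n))‖ := by
        rw [map_smul, norm_smul, hφ2]
        simp only [Real.norm_eq_abs, RCLike.ofReal_real_eq_id, id]
        gcongr
        rw [abs_of_nonneg (norm_nonneg _)]
        exact hyε _
      have h4 := norm_sub_le_norm_add ((φ (f n)) (a n • y (f n)))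
        (∑ m ∈ F.erase n, (φ (f n)) (a m • y (f m)))
      linarith
    have h2 := (φ (f n)).le_opNorm (opc0 _ h a)
    have h3 : ‖φ (f n)‖ * ‖opc0 _ h a‖ ≤ 1 * ‖opc0 _ h a‖ := by
      gcongr
      exact hφ1 _
    linarith
  have h1 : ‖a‖ ≤ (‖opc0 _ h a‖ + ε / 2 * ‖a‖) / ε := by
    refine (c0_norm_le (by positivity)).2 fun n => ?_
    rw [le_div_iff₀ hε]
    exact key n
  rw [le_div_iff₀ hε] at h1
  linarith

/-- Lemma 2: a non summable image of the basis gives a fixed copy of `c0`. -/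
theorem exists_block_embedding {X : Type*} [NormedAddCommGroup X] [NormedSpace ℝ X]
    [CompleteSpace X] (L : c0 →L[ℝ] X) (hL : ¬ Summable fun n => L (e n)) :
    ∃ S : c0 →L[ℝ] c0, ∃ c : ℝ, 0 < c ∧ ∀ z, c * ‖z‖ ≤ ‖L (S z)‖ := by
  rw [summable_iff_vanishing_norm] at hL
  push Not at hL
  obtain ⟨ε, hε, h⟩ := hL
  choose t ht1 ht2 using h
  -- recursive construction of disjoint blocks
  let s : ℕ → Finset ℕ := fun n => Nat.rec ∅ (fun _ s => s ∪ t s) n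
  have hs : ∀ n, s (n + 1) = s n ∪ t (s n) := fun n => rfl
  have hmono : Monotone s := monotone_nat_of_le_succ fun n => by
    rw [hs]; exact Finset.subset_union_left
  let F : ℕ → Finset ℕ := fun n => t (s n)
  have hdisj : ∀ m n, m < n → Disjoint (F n) (F m) := by
    intro m n hmn
    refine Finset.disjoint_of_subset_right ?_ (ht1 (s n))
    exact (Finset.subset_union_right.trans (hs m).symm.subset).trans (hmono hmn)
  let u : ℕ → c0 := fun n => ∑ i ∈ F n, e i
  have hut : ∀ n k, u n k = if k ∈ F n then 1 else 0 := by
    intro n k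
    simp only [u, c0_sum_apply, e_apply]
    rw [Finset.sum_ite_eq]
  have hu : WUC u := by
    refine WUC.of_coord 1 fun k G => ?_
    by_cases hk : ∃ n ∈ G, k ∈ F n
    · obtain ⟨n, hn, hkn⟩ := hk
      rw [Finset.sum_eq_single_of_mem n hn]
      · rw [hut, if_pos hkn]; simp
      · intro m _ hmn
        rw [hut, if_neg, abs_zero]
        intro hkm
        rcases lt_or_gt_of_ne hmn with h | h
        · exact Finset.disjoint_left.1 (hdisj _ _ h) hkn hkm
        · exact Finset.disjoint_left.1 (hdisj _ _ h) hkm hkn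
    · push Not at hk
      rw [Finset.sum_eq_zero]
      · exact zero_le_one
      · intro n hn
        rw [hut, if_neg (hk n hn), abs_zero]
  obtain ⟨f, hf, hfc⟩ := bessaga_pelczynski (hu.map L) hε (fun n => by
    simp only [u, map_sum]
    exact ht2 _)
  refine ⟨opc0 _ (hu.comp_inj hf.injective), ε / 2, by positivity, fun z => ?_⟩
  refine (hfc ((hu.map L).comp_inj hf.injective) z).trans (le_of_eq ?_)
  congr 1
  change _ = (L.comp (opc0 _ (hu.comp_inj hf.injective))) z
  congr 1
  refine c0_ext_clm fun i => ?_
  simp [opc0_e]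

section weak
variable {Y : Type*} [NormedAddCommGroup Y] [NormedSpace ℝ Y]

theorem RelWeakCompact.of_subset {s : Set Y} {K : Set (WeakSpace ℝ Y)} (hK : IsCompact K)
    (h : (toWeakSpace ℝ Y) '' s ⊆ K) : RelWeakCompact s :=
  hK.of_isClosed_subset isClosed_closure (closure_minimal h hK.isClosed)

theorem RelWeakCompact.mono {s t : Set Y} (ht : RelWeakCompact t) (h : s ⊆ t) :
    RelWeakCompact s :=
  RelWeakCompact.of_subset ht ((Set.image_mono h).trans subset_closure)

theorem RelWeakCompact.of_compact {s : Set Y} (hs : IsCompact (closure s)) :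
    RelWeakCompact s := by
  refine RelWeakCompact.of_subset (hs.image (toWeakSpaceCLM ℝ Y).continuous) ?_
  exact Set.image_mono subset_closure

theorem RelWeakCompact.sub {f g : ℕ → Y} (hf : RelWeakCompact (Set.range f))
    (hg : RelWeakCompact (Set.range g)) : RelWeakCompact (Set.range fun n => f n - g n) := by
  have h : IsCompact ((fun p : WeakSpace ℝ Y × WeakSpace ℝ Y => p.1 - p.2) ''
      (closure ((toWeakSpace ℝ Y) '' (Set.range f)) ×ˢ
        closure ((toWeakSpace ℝ Y) '' (Set.range g)))) :=
    (IsCompact.prod hf hg).image (continuous_fst.sub continuous_snd)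
  refine RelWeakCompact.of_subset h ?_
  rintro _ ⟨_, ⟨n, rfl⟩, rfl⟩
  refine ⟨(toWeakSpace ℝ Y (f n), toWeakSpace ℝ Y (g n)), ⟨subset_closure ⟨_, ⟨n, rfl⟩, rfl⟩,
    subset_closure ⟨_, ⟨n, rfl⟩, rfl⟩⟩, ?_⟩
  simp

theorem not_relWeakCompact_partial_sums [CompleteSpace Y] (T : c0 →L[ℝ] Y) {c : ℝ} (hc : 0 < c)
    (hT : ∀ z, c * ‖z‖ ≤ ‖T z‖) :
    ¬ RelWeakCompact (Set.range fun m => ∑ i ∈ Finset.range m, T (e i)) := by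
  intro h
  set σ : ℕ → Y := fun m => ∑ i ∈ Finset.range m, T (e i) with hσ
  have h' : IsCompact (closure ((toWeakSpace ℝ Y) '' (Set.range σ))) := h
  have hfr : ∃ᶠ m in (atTop : Filter ℕ),
      toWeakSpace ℝ Y (σ m) ∈ closure ((toWeakSpace ℝ Y) '' (Set.range σ)) :=
    Eventually.frequently (Eventually.of_forall fun m =>
      subset_closure (Set.mem_image_of_mem _ (Set.mem_range_self m)))
  obtain ⟨w, -, hw⟩ := h'.exists_mapClusterPt_of_frequently hfr
  have hanti : AntilipschitzWith (Real.toNNReal c⁻¹) T :=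
    ContinuousLinearMap.antilipschitz_of_bound T fun z => by
      rw [Real.coe_toNNReal _ (by positivity), inv_mul_eq_div, le_div_iff₀ hc, mul_comm]
      exact hT z
  have hemb : IsClosedEmbedding T := hanti.isClosedEmbedding T.uniformContinuous
  let D : ℕ → Set c0 := fun i => {b | ∀ j ≤ i, b j = 1}
  have hDc : ∀ i, IsClosed (D i) := fun i => by
    have : D i = ⋂ j, ⋂ (_ : j ≤ i), {b | c0eval j b = 1} := by
      ext b; simp [D, c0eval_apply]
    rw [this]
    exact isClosed_iInter fun j => isClosed_iInter fun _ =>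
      isClosed_eq (c0eval j).continuous continuous_const
  have hDconv : ∀ i, Convex ℝ (D i) := by
    intro i x hx y hy a b _ _ hab j hj
    rw [ZeroAtInftyContinuousMap.add_apply, ZeroAtInftyContinuousMap.smul_apply,
      ZeroAtInftyContinuousMap.smul_apply, hx j hj, hy j hj]
    simpa using hab
  have hH : ∀ i, IsClosed ((toWeakSpace ℝ Y) '' (T '' D i)) := by
    intro i
    have h1 : Convex ℝ (T '' D i) := (hDconv i).linear_image (T : c0 →ₗ[ℝ] Y)
    have h2 := h1.toWeakSpace_closure ℝ
    rw [(hemb.isClosedMap _ (hDc i)).closure_eq] at h2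
    rw [h2]
    exact isClosed_closure
  have hmem : ∀ i, w ∈ (toWeakSpace ℝ Y) '' (T '' D i) := by
    intro i
    refine (hH i).mem_of_mapClusterPt hw ?_
    filter_upwards [Filter.eventually_gt_atTop i] with m hm
    refine ⟨σ m, ⟨∑ j ∈ Finset.range m, e j, fun j hj => ?_, by simp [hσ]⟩, rfl⟩
    rw [c0_sum_apply]
    simp only [e_apply]
    rw [Finset.sum_ite_eq, if_pos (Finset.mem_range.2 (by omega))]
  obtain ⟨_, ⟨b, hb, rfl⟩, hbw⟩ := hmem 0
  have hall : ∀ i, b i = 1 := by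
    intro i
    obtain ⟨_, ⟨b', hb', rfl⟩, hbw'⟩ := hmem i
    have : T b = T b' := (toWeakSpace ℝ Y).injective (hbw.trans hbw'.symm)
    rw [hemb.injective this]
    exact hb' i le_rfl
  obtain ⟨s, hs⟩ := c0_small b one_pos
  obtain ⟨t, ht⟩ := Infinite.exists_notMem_finset s
  have := hs t ht
  rw [hall t] at this
  simp at this

end weak

/-- Greedy subsequence extraction. -/
theorem exists_greedy (R : Finset ℕ → ℕ → Prop) (h : ∀ s, ∀ᶠ n in atTop, R s n) :
    ∃ g : ℕ → ℕ, StrictMono g ∧ ∀ i, R ((Finset.range i).image g) (g i) := by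
  have h' : ∀ s : Finset ℕ, ∃ n, (∀ m ∈ s, m < n) ∧ R s n := by
    intro s
    obtain ⟨n, hn1, hn2⟩ := ((h s).and (Filter.eventually_gt_atTop (s.sup id))).exists
    exact ⟨n, fun m hm => lt_of_le_of_lt (Finset.le_sup (f := id) hm) hn2, hn1⟩
  choose N hN1 hN2 using h'
  let s : ℕ → Finset ℕ := fun n => Nat.rec ∅ (fun _ s => insert (N s) s) n
  have hs : ∀ n, s (n + 1) = insert (N (s n)) (s n) := fun n => rfl
  have himg : ∀ n, s n = (Finset.range n).image (fun i => N (s i)) := by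
    intro n
    induction n with
    | zero => rfl
    | succ n ih => rw [hs, Finset.range_add_one, Finset.image_insert, ← ih]
  refine ⟨fun i => N (s i), strictMono_nat_of_lt_succ fun n => ?_, fun i => ?_⟩
  · exact hN1 _ _ (by rw [hs]; exact Finset.mem_insert_self _ _)
  · rw [← himg]; exact hN2 _

section main
variable {Y : Type*} [NormedAddCommGroup Y] [NormedSpace ℝ Y]

/-- Polynomial-type maps of degree at most `k` (via finite differences). -/
def IsDeg : ℕ → (c0 → Y) → Prop
  | 0, Q => ∀ x y, Q x = Q y
  | k + 1, Q => ∀ h : c0, IsDeg k (fun x => Q (x + h) - Q x)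

/-- Bounded on bounded sets. -/
def BddMap (Q : c0 → Y) : Prop := ∀ R : ℝ, ∃ C : ℝ, ∀ x, ‖x‖ ≤ R → ‖Q x‖ ≤ C

/-- Coordinatewise uniformly bounded variation. -/
def BVSeq (s : ℕ → c0) : Prop :=
  ∃ C : ℝ, ∀ t n, ∑ i ∈ Finset.range n, |s (i + 1) t - s i t| ≤ C

/-- Values along sequences of bounded variation are relatively weakly compact. -/
def GoodMap (Q : c0 → Y) : Prop :=
  ∀ s : ℕ → c0, BVSeq s → RelWeakCompact (Set.range fun n => Q (s n))

/-- Bounded sequence. -/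
def BddSeq (a : ℕ → c0) : Prop := ∃ M : ℝ, ∀ n, ‖a n‖ ≤ M

/-- Sequential uniform continuity for coordinatewise convergence on bounded sets. -/
def UnifMap (Q : c0 → Y) : Prop :=
  ∀ a b : ℕ → c0, BddSeq a → BddSeq b →
    (∀ t, Tendsto (fun n => a n t - b n t) atTop (𝓝 0)) →
    Tendsto (fun n => Q (a n) - Q (b n)) atTop (𝓝 0)

theorem sum_half_le (F : Finset ℕ) : ∑ i ∈ F, (1 / 2 : ℝ) ^ i ≤ 2 := by
  have := summable_geometric_two.sum_le_tsum F (fun i _ => by positivity)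
  rwa [tsum_geometric_two] at this

theorem coord_eventually_small (x : ℕ → c0) (s : Finset ℕ) {η : ℝ} (hη : 0 < η) :
    {t | η ≤ ∑ j ∈ s, |x j t|}.Finite := by
  have h : Tendsto (fun t => ∑ j ∈ s, |x j t|) cofinite (𝓝 0) := by
    rw [show (0 : ℝ) = ∑ j ∈ s, |(0 : ℝ)| by simp]
    refine tendsto_finsetSum s fun j _ => ?_
    have := (x j).zero_at_infty'
    rw [Filter.cocompact_eq_cofinite] at this
    exact this.abs
  have h2 := h.eventually_lt_const hη
  rw [Filter.eventually_cofinite] at h2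
  simpa using h2

theorem null_step [CompleteSpace Y] {Q : c0 → Y} (hB : BddMap Q) (hG : GoodMap Q)
    (hcross : ∀ (z : c0) (x : ℕ → c0), BddSeq x → (∀ t, Tendsto (fun n => x n t) atTop (𝓝 0)) →
      Tendsto (fun n => Q (x n + z) - Q (x n) - (Q z - Q 0)) atTop (𝓝 0))
    (x : ℕ → c0) (hx : BddSeq x) (hx0 : ∀ t, Tendsto (fun n => x n t) atTop (𝓝 0)) :
    Tendsto (fun n => Q (x n) - Q 0) atTop (𝓝 0) := by
  by_contra hcon
  rw [Metric.tendsto_nhds] at hcon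
  push Not at hcon
  obtain ⟨ε, hε, hfr⟩ := hcon
  obtain ⟨ψ, hψ, hψε⟩ := Filter.extraction_of_frequently_atTop hfr
  obtain ⟨M, hM⟩ := hx
  have hM0 : 0 ≤ M := (norm_nonneg _).trans (hM 0)
  let x' : ℕ → c0 := fun n => x (ψ n)
  have hx' : BddSeq x' := ⟨M, fun n => hM _⟩
  have hx'0 : ∀ t, Tendsto (fun n => x' n t) atTop (𝓝 0) :=
    fun t => (hx0 t).comp hψ.tendsto_atTop
  obtain ⟨g, hg, hR⟩ := exists_greedy (fun s n =>
      (∀ t, (1 / 2 : ℝ) ^ s.card ≤ ∑ j ∈ s, |x' j t| → |x' n t| ≤ (1 / 2 : ℝ) ^ s.card) ∧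
      ∀ G ∈ s.powerset, ‖Q (x' n + ∑ j ∈ G, x' j) - Q (x' n) - (Q (∑ j ∈ G, x' j) - Q 0)‖
        ≤ (1 / 2 : ℝ) ^ s.card) (fun s => by
    have hpos : (0 : ℝ) < (1 / 2 : ℝ) ^ s.card := by positivity
    refine Filter.Eventually.and ?_ ?_
    · have := (Filter.eventually_all_finite (l := (atTop : Filter ℕ))
        (p := fun t n => |x' n t| ≤ (1 / 2 : ℝ) ^ s.card)
        (coord_eventually_small x' s hpos)).2 (fun t _ => by
          have h := (hx'0 t).abs
          rw [abs_zero] at h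
          exact h.eventually_le_const hpos)
      exact this
    · rw [Filter.eventually_all_finset]
      intro G _
      have h := (hcross (∑ j ∈ G, x' j) x' hx' hx'0).norm
      rw [norm_zero] at h
      exact h.eventually_le_const hpos)
  let X : ℕ → c0 := fun i => x' (g i)
  have hcard : ∀ i, ((Finset.range i).image g).card = i := fun i => by
    rw [Finset.card_image_of_injective _ hg.injective, Finset.card_range]
  have ha : ∀ i t, (1 / 2 : ℝ) ^ i ≤ ∑ j ∈ Finset.range i, |X j t| →
      |X i t| ≤ (1 / 2 : ℝ) ^ i := by
    intro i t h
    have := (hR i).1 t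
    rw [hcard, Finset.sum_image (fun _ _ _ _ h => hg.injective h)] at this
    exact this h
  have hb : ∀ i (G : Finset ℕ), G ⊆ Finset.range i →
      ‖Q (X i + ∑ j ∈ G, X j) - Q (X i) - (Q (∑ j ∈ G, X j) - Q 0)‖ ≤ (1 / 2 : ℝ) ^ i := by
    intro i G hGi
    have := (hR i).2 (G.image g) (Finset.mem_powerset.2 (Finset.image_subset_image hGi))
    rw [hcard, Finset.sum_image (fun _ _ _ _ h => hg.injective h)] at this
    exact this
  have hXM : ∀ i, ‖X i‖ ≤ M := fun i => hM _
  have hsum : ∀ t i, ∑ j ∈ Finset.range i, |X j t| ≤ M + ∑ j ∈ Finset.range i, (1 / 2 : ℝ) ^ j := by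
    intro t i
    induction i with
    | zero => simpa using hM0
    | succ i ih =>
      rw [Finset.sum_range_succ, Finset.sum_range_succ]
      by_cases h : (1 / 2 : ℝ) ^ i ≤ ∑ j ∈ Finset.range i, |X j t|
      · have := ha i t h
        linarith
      · push Not at h
        have h1 : |X i t| ≤ M := (c0_abs_le _ _).trans (hXM i)
        have h2 : 0 ≤ ∑ j ∈ Finset.range i, (1 / 2 : ℝ) ^ j :=
          Finset.sum_nonneg fun _ _ => by positivity
        linarith
  have hsumF : ∀ t (F : Finset ℕ), ∑ j ∈ F, |X j t| ≤ M + 2 := by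
    intro t F
    have hF : F ⊆ Finset.range (F.sup id + 1) := fun i hi =>
      Finset.mem_range.2 (Nat.lt_succ_of_le (Finset.le_sup (f := id) hi))
    refine (Finset.sum_le_sum_of_subset_of_nonneg hF (fun _ _ _ => abs_nonneg _)).trans ?_
    exact (hsum t _).trans (by linarith [sum_half_le (Finset.range (F.sup id + 1))])
  let y : ℕ → Y := fun i => Q (X i) - Q 0
  have hyε : ∀ i, ε ≤ ‖y i‖ := fun i => by
    have := hψε (g i)
    simpa [y, X, x'] using this
  have happrox : ∀ F : Finset ℕ, ‖∑ i ∈ F, y i - (Q (∑ i ∈ F, X i) - Q 0)‖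
      ≤ ∑ i ∈ F, (1 / 2 : ℝ) ^ i := by
    intro F
    induction F using Finset.induction_on_max with
    | empty => simp
    | insert i F hF ih =>
      have hi : i ∉ F := fun h => lt_irrefl _ (hF i h)
      rw [Finset.sum_insert hi, Finset.sum_insert hi, Finset.sum_insert hi]
      have h1 := hb i F (fun j hj => Finset.mem_range.2 (hF j hj))
      have h2 : y i + ∑ j ∈ F, y j - (Q (X i + ∑ j ∈ F, X j) - Q 0)
          = (∑ j ∈ F, y j - (Q (∑ j ∈ F, X j) - Q 0))
            - (Q (X i + ∑ j ∈ F, X j) - Q (X i) - (Q (∑ j ∈ F, X j) - Q 0)) := by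
        simp only [y]; abel
      rw [h2]
      refine (norm_sub_le _ _).trans ?_
      linarith
  obtain ⟨C, hC⟩ := hB (M + 2)
  have hXs : ∀ F : Finset ℕ, ‖∑ i ∈ F, X i‖ ≤ M + 2 := fun F =>
    (c0_norm_le (by linarith)).2 fun t => by
      rw [c0_sum_apply]
      exact (Finset.abs_sum_le_sum_abs _ _).trans (hsumF t F)
  have hyW : WUC y := by
    refine WUC.of_bound (2 + (C + ‖Q 0‖)) fun F => ?_
    have h1 := (happrox F).trans (sum_half_le F)
    have h2 : ‖Q (∑ i ∈ F, X i) - Q 0‖ ≤ C + ‖Q 0‖ :=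
      (norm_sub_le _ _).trans (by linarith [hC _ (hXs F)])
    calc ‖∑ i ∈ F, y i‖ = ‖(∑ i ∈ F, y i - (Q (∑ i ∈ F, X i) - Q 0))
          + (Q (∑ i ∈ F, X i) - Q 0)‖ := by congr 1; abel
      _ ≤ _ := norm_add_le _ _
      _ ≤ _ := add_le_add h1 h2
  obtain ⟨f, hf, hfc⟩ := bessaga_pelczynski hyW hε hyε
  have hyf := hyW.comp_inj hf.injective
  refine not_relWeakCompact_partial_sums (opc0 _ hyf) (c := ε / 2) (by positivity) (hfc hyf) ?_
  simp only [opc0_e]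
  let s : ℕ → c0 := fun m => ∑ i ∈ Finset.range m, X (f i)
  have hsBV : BVSeq s := by
    refine ⟨M + 2, fun t n => ?_⟩
    have : ∀ i, s (i + 1) t - s i t = X (f i) t := by
      intro i
      simp only [s]
      rw [c0_sum_apply, c0_sum_apply, Finset.sum_range_succ]
      ring
    simp_rw [this]
    rw [← Finset.sum_image (f := fun j => |X j t|) (g := f) (fun _ _ _ _ h => hf.injective h)]
    exact hsumF t _
  let r : ℕ → Y := fun m => Q (s m) - ∑ i ∈ Finset.range m, y (f i)
  have hrC : CauchySeq r := by
    refine cauchySeq_of_le_geometric (1 / 2) 1 (by norm_num) fun m => ?_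
    have h1 := hb (f m) ((Finset.range m).image f) (fun j hj => by
      obtain ⟨i, hi, rfl⟩ := Finset.mem_image.1 hj
      exact Finset.mem_range.2 (hf (Finset.mem_range.1 hi)))
    rw [Finset.sum_image (fun _ _ _ _ h => hf.injective h)] at h1
    rw [dist_comm, dist_eq_norm]
    have h2 : r (m + 1) - r m = Q (X (f m) + ∑ i ∈ Finset.range m, X (f i)) - Q (X (f m))
        - (Q (∑ i ∈ Finset.range m, X (f i)) - Q 0) := by
      simp only [r, s, y, Finset.sum_range_succ]
      rw [add_comm (X (f m))]
      abel
    rw [h2, one_mul]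
    refine h1.trans ?_
    exact pow_le_pow_of_le_one (by norm_num) (by norm_num) (hf.id_le m)
  obtain ⟨l, hl⟩ := cauchySeq_tendsto_of_complete hrC
  have hrK : IsCompact (closure (Set.range r)) :=
    hl.isCompact_insert_range.of_isClosed_subset isClosed_closure
      (closure_minimal (Set.subset_insert _ _) hl.isCompact_insert_range.isClosed)
  have := (hG s hsBV).sub (RelWeakCompact.of_compact hrK)
  simpa [r] using this

theorem exists_coord_subseq (a : ℕ → c0) (ha : BddSeq a) :
    ∃ φ : ℕ → ℕ, StrictMono φ ∧ ∃ l : ℕ → ℝ, ∀ t, Tendsto (fun n => a (φ n) t) atTop (𝓝 (l t)) := by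
  obtain ⟨M, hM⟩ := ha
  have hK : IsCompact (Set.pi Set.univ fun _ : ℕ => Set.Icc (-M) M) :=
    isCompact_univ_pi fun _ => isCompact_Icc
  obtain ⟨l, -, φ, hφ, hl⟩ := hK.tendsto_subseq (x := fun n => (a n : ℕ → ℝ)) (fun n t _ =>
    abs_le.1 ((c0_abs_le _ _).trans (hM n)))
  exact ⟨φ, hφ, l, fun t => (tendsto_pi_nhds.1 hl t)⟩

theorem BVSeq.add_const {s : ℕ → c0} (hs : BVSeq s) (h : c0) : BVSeq fun n => s n + h := by
  obtain ⟨C, hC⟩ := hs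
  refine ⟨C, fun t n => ?_⟩
  simpa using hC t n

theorem unif_of_good [CompleteSpace Y] (k : ℕ) : ∀ Q : c0 → Y, IsDeg k Q → BddMap Q → GoodMap Q →
    UnifMap Q := by
  induction k with
  | zero =>
    intro Q hQ _ _ a b _ _ _
    have : ∀ n, Q (a n) - Q (b n) = 0 := fun n => sub_eq_zero.2 (hQ _ _)
    simp_rw [this]
    exact tendsto_const_nhds
  | succ k ih =>
    intro Q hQ hB hG
    have hΔ : ∀ h : c0, UnifMap (fun x => Q (x + h) - Q x) := by
      intro h
      refine ih _ (hQ h) ?_ ?_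
      · intro R
        obtain ⟨C, hC⟩ := hB (R + ‖h‖)
        refine ⟨C + C, fun x hx => (norm_sub_le _ _).trans (add_le_add (hC _ ?_) (hC _ ?_))⟩
        · exact (norm_add_le _ _).trans (by linarith)
        · linarith [norm_nonneg h]
      · intro s hs
        exact (hG _ (hs.add_const h)).sub (hG s hs)
    have hnull := null_step hB hG (fun z x hx hx0 => by
      have := hΔ z x (fun _ => 0) hx ⟨0, fun _ => by simp⟩ (by simpa using hx0)
      simpa using this)
    intro a b ha hb hab
    refine tendsto_of_subseq_tendsto fun ns hns => ?_
    obtain ⟨M, hM⟩ := ha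
    obtain ⟨M', hM'⟩ := hb
    obtain ⟨φ, hφ, l, hl⟩ := exists_coord_subseq (fun n => a (ns n)) ⟨M, fun n => hM _⟩
    let a' : ℕ → c0 := fun n => a (ns (φ n))
    let b' : ℕ → c0 := fun n => b (ns (φ n))
    have ha' : BddSeq a' := ⟨M, fun n => hM _⟩
    have hb' : BddSeq b' := ⟨M', fun n => hM' _⟩
    have hab' : ∀ t, Tendsto (fun n => a' n t - b' n t) atTop (𝓝 0) := fun t =>
      (hab t).comp (hns.comp hφ.tendsto_atTop)
    have hlb : ∀ t, Tendsto (fun n => b' n t) atTop (𝓝 (l t)) := fun t => by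
      have := (hl t).sub (hab' t)
      simpa [a'] using this
    have hN : ∀ m : ℕ, ∃ N ≥ m, ‖(Q (a' N + -b' m) - Q (a' N)) - (Q (b' N + -b' m) - Q (b' N))‖
        ≤ 1 / ((m : ℝ) + 1) := by
      intro m
      have h := (hΔ (-b' m) a' b' ha' hb' hab').norm
      rw [norm_zero] at h
      have hp : (0 : ℝ) < 1 / ((m : ℝ) + 1) := by positivity
      obtain ⟨N, h1, h2⟩ := ((h.eventually_le_const hp).and (eventually_ge_atTop m)).exists
      exact ⟨N, h2, h1⟩
    choose N hNm hN using hN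
    have hNt : Tendsto N atTop atTop := tendsto_atTop_mono hNm tendsto_id
    refine ⟨fun m => φ (N m), ?_⟩
    have h1 := hnull (fun m => a' (N m) + -b' m) ⟨M + M', fun n => (norm_add_le _ _).trans
      (by rw [norm_neg]; exact add_le_add (hM _) (hM' _))⟩ (fun t => by
        have := ((hl t).comp hNt).sub (hlb t)
        rw [sub_self] at this
        refine this.congr fun n => ?_
        simp [a', sub_eq_add_neg])
    have h2 := hnull (fun m => b' (N m) + -b' m) ⟨M' + M', fun n => (norm_add_le _ _).trans
      (by rw [norm_neg]; exact add_le_add (hM' _) (hM' _))⟩ (fun t => by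
        have := ((hlb t).comp hNt).sub (hlb t)
        rw [sub_self] at this
        refine this.congr fun n => ?_
        simp [sub_eq_add_neg])
    have h3 : Tendsto (fun m => (Q (a' (N m) + -b' m) - Q (a' (N m)))
        - (Q (b' (N m) + -b' m) - Q (b' (N m)))) atTop (𝓝 0) :=
      squeeze_zero_norm hN tendsto_one_div_add_atTop_nhds_zero_nat
    have h4 := (h1.sub h2).sub h3
    simp only [sub_zero] at h4
    refine h4.congr fun m => ?_
    simp only [a', b']
    abel

end main

section conseq
variable {Y : Type*} [NormedAddCommGroup Y] [NormedSpace ℝ Y]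

theorem UnifMap.ucPoly [CompleteSpace Y] {Q : c0 → Y} (hQ : UnifMap Q) : UCPoly Q := by
  intro z hz
  obtain ⟨C, hC0, hC⟩ := hz.coord
  let s : ℕ → c0 := fun n => ∑ i ∈ Finset.range n, z i
  have hs : ∀ n, ‖s n‖ ≤ C := fun n => (c0_norm_le hC0).2 fun t => by
    simp only [s]
    rw [c0_sum_apply]
    exact (Finset.abs_sum_le_sum_abs _ _).trans (hC t _)
  have hst : ∀ t, ∃ l, Tendsto (fun n => s n t) atTop (𝓝 l) := fun t => by
    have h1 : Summable fun i => z i t := (hz (c0eval t)).of_abs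
    refine ⟨_, h1.hasSum.tendsto_sum_nat.congr fun n => ?_⟩
    simp only [s]
    rw [c0_sum_apply]
  choose l hl using hst
  have hC : CauchySeq fun n => Q (s n) := by
    rw [cauchySeq_iff_tendsto_dist_atTop_0]
    refine tendsto_of_seq_tendsto fun u hu => ?_
    rw [← prod_atTop_atTop_eq, tendsto_prod_iff'] at hu
    have h := (hQ (fun n => s (u n).1) (fun n => s (u n).2) ⟨C, fun _ => hs _⟩ ⟨C, fun _ => hs _⟩
      (fun t => by
        have := ((hl t).comp hu.1).sub ((hl t).comp hu.2)
        rw [sub_self] at this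
        exact this)).norm
    rw [norm_zero] at h
    refine h.congr fun n => ?_
    simp [dist_eq_norm]
  exact cauchySeq_tendsto_of_complete hC

theorem UnifMap.compact [CompleteSpace Y] {Q : c0 → Y} (hQ : UnifMap Q) (R : ℝ) :
    IsCompact (closure (Q '' closedBall 0 R)) := by
  refine IsSeqCompact.isCompact ?_
  intro u hu
  have h1 : ∀ n : ℕ, ∃ a : c0, ‖a‖ ≤ R ∧ dist (u n) (Q a) < 1 / ((n : ℝ) + 1) := by
    intro n
    obtain ⟨_, ⟨a, ha, rfl⟩, hb⟩ := Metric.mem_closure_iff.1 (hu n) (1 / ((n : ℝ) + 1))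
      (by positivity)
    exact ⟨a, by simpa using ha, hb⟩
  choose a ha hau using h1
  obtain ⟨φ, hφ, l, hl⟩ := exists_coord_subseq a ⟨R, ha⟩
  have hC : CauchySeq fun n => Q (a (φ n)) := by
    rw [cauchySeq_iff_tendsto_dist_atTop_0]
    refine tendsto_of_seq_tendsto fun u hu => ?_
    rw [← prod_atTop_atTop_eq, tendsto_prod_iff'] at hu
    have h := (hQ (fun n => a (φ (u n).1)) (fun n => a (φ (u n).2)) ⟨R, fun _ => ha _⟩
      ⟨R, fun _ => ha _⟩
      (fun t => by
        have := ((hl t).comp hu.1).sub ((hl t).comp hu.2)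
        rw [sub_self] at this
        exact this)).norm
    rw [norm_zero] at h
    refine h.congr fun n => ?_
    simp [dist_eq_norm]
  obtain ⟨y, hy⟩ := cauchySeq_tendsto_of_complete hC
  have h2 : Tendsto (fun n => u (φ n)) atTop (𝓝 y) := by
    refine (tendsto_iff_of_dist ?_).2 hy
    refine squeeze_zero (fun _ => dist_nonneg) (fun n => (hau (φ n)).le) ?_
    exact tendsto_one_div_add_atTop_nhds_zero_nat.comp hφ.tendsto_atTop
  refine ⟨y, ?_, φ, hφ, h2⟩
  exact mem_closure_of_tendsto hy (Eventually.of_forall fun n =>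
    ⟨_, by simpa using ha (φ n), rfl⟩)

theorem BVSeq.bddSeq {s : ℕ → c0} (hs : BVSeq s) : BddSeq s := by
  obtain ⟨C, hC⟩ := hs
  have hC0 : 0 ≤ C := by simpa using hC 0 0
  refine ⟨‖s 0‖ + C, fun n => (c0_norm_le (by positivity)).2 fun t => ?_⟩
  have h1 : s n t = s 0 t + ∑ i ∈ Finset.range n, (s (i + 1) t - s i t) := by
    rw [Finset.sum_range_sub (fun i => s i t)]; ring
  rw [h1]
  refine (abs_add_le _ _).trans (add_le_add (c0_abs_le _ _) ?_)
  exact (Finset.abs_sum_le_sum_abs _ _).trans (hC t n)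

theorem GoodMap.of_seq {Q : c0 → Y}
    (h : ∀ a : ℕ → c0, (∃ M : ℝ, ∀ n, ‖a n‖ ≤ M) → RelWeakCompact (Set.range fun n => Q (a n))) :
    GoodMap Q := fun s hs => h s hs.bddSeq

theorem GoodMap.of_ball {Q : c0 → Y}
    (h : ∀ R : ℝ, IsCompact (closure (Q '' closedBall 0 R))) : GoodMap Q := by
  refine GoodMap.of_seq fun a ⟨M, hM⟩ => RelWeakCompact.mono (RelWeakCompact.of_compact (h M)) ?_
  rintro _ ⟨n, rfl⟩
  exact ⟨_, by simpa using hM n, rfl⟩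

theorem GoodMap.of_ucPoly {Q : c0 → Y} (h : UCPoly Q) : GoodMap Q := by
  intro s hs
  have hsb := hs
  obtain ⟨C, hC⟩ := hs
  let z : ℕ → c0 := fun n => Nat.casesOn n (s 0) (fun i => s (i + 1) - s i)
  have hz0 : z 0 = s 0 := rfl
  have hz1 : ∀ i, z (i + 1) = s (i + 1) - s i := fun i => rfl
  have hzs : ∀ n, ∑ i ∈ Finset.range (n + 1), z i = s n := by
    intro n
    rw [Finset.sum_range_succ', hz0]
    simp_rw [hz1]
    rw [Finset.sum_range_sub]
    abel
  have hz : WUC z := by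
    refine WUC.of_coord (C + ‖s 0‖) fun t F => ?_
    have hF : F ⊆ Finset.range (F.sup id + 1) := fun i hi =>
      Finset.mem_range.2 (Nat.lt_succ_of_le (Finset.le_sup (f := id) hi))
    refine (Finset.sum_le_sum_of_subset_of_nonneg hF (fun _ _ _ => abs_nonneg _)).trans ?_
    rw [Finset.sum_range_succ', hz0]
    refine add_le_add ?_ (c0_abs_le _ _)
    simp_rw [hz1]
    exact hC t _
  obtain ⟨L, hL⟩ := h z hz
  have hl : Tendsto (fun n => Q (s n)) atTop (𝓝 L) := by
    have := hL.comp (tendsto_add_atTop_nat 1)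
    refine this.congr fun n => ?_
    simp only [Function.comp_apply, hzs]
  exact RelWeakCompact.of_compact (hl.isCompact_insert_range.of_isClosed_subset isClosed_closure
      (closure_minimal (Set.subset_insert _ _) hl.isCompact_insert_range.isClosed))

theorem UCPoly.comp {E E' : Type*} [NormedAddCommGroup E] [NormedSpace ℝ E]
    [NormedAddCommGroup E'] [NormedSpace ℝ E'] {Q : E → Y} (h : UCPoly Q) (T : E' →L[ℝ] E) :
    UCPoly fun x => Q (T x) := by
  intro z hz
  obtain ⟨L, hL⟩ := h _ (hz.map T)
  refine ⟨L, hL.congr fun n => ?_⟩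
  simp only [map_sum]

theorem IsDeg.sum {ι : Type*} (k : ℕ) : ∀ (F : Finset ι) (f : ι → c0 → Y),
    (∀ i ∈ F, IsDeg k (f i)) → IsDeg k (fun x => ∑ i ∈ F, f i x) := by
  induction k with
  | zero => exact fun F f h x y => Finset.sum_congr rfl fun i hi => h i hi x y
  | succ k ih =>
    intro F f h v
    simp_rw [← Finset.sum_sub_distrib]
    exact ih F (fun i x => f i (x + v) - f i x) fun i hi => h i hi v

theorem isDeg_piecewise {k : ℕ} (A : ContinuousMultilinearMap ℝ (fun _ : Fin k => c0) Y) (m : ℕ) :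
    ∀ (s : Finset (Fin k)), s.card ≤ m → ∀ c : Fin k → c0,
      IsDeg m (fun x => A (s.piecewise (fun _ => x) c)) := by
  induction m with
  | zero =>
    intro s hs c x y
    have : s = ∅ := Finset.card_eq_zero.1 (Nat.le_zero.1 hs)
    subst this
    simp
  | succ m ih =>
    intro s hs c h
    have key : (fun x : c0 => A (s.piecewise (fun _ => x + h) c) - A (s.piecewise (fun _ => x) c))
        = fun x => ∑ t ∈ s.powerset.erase s,
            A (t.piecewise (fun _ => x) (s.piecewise (fun _ => h) c)) := by
      funext x
      have h1 := A.map_piecewise_add (fun _ => x) (s.piecewise (fun _ => h) c) s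
      rw [← Finset.add_sum_erase _ _ (Finset.mem_powerset_self s)] at h1
      have h2 : s.piecewise ((fun _ => x) + s.piecewise (fun _ => h) c)
          (s.piecewise (fun _ => h) c) = s.piecewise (fun _ => x + h) c := by
        funext i
        by_cases hi : i ∈ s <;> simp [hi]
      have h3 : s.piecewise (fun _ => x) (s.piecewise (fun _ => h) c)
          = s.piecewise (fun _ => x) c := by
        funext i
        by_cases hi : i ∈ s <;> simp [hi]
      rw [h2, h3] at h1
      rw [h1]
      abel
    rw [key]
    refine IsDeg.sum m _ (fun t x => A (t.piecewise (fun _ => x) (s.piecewise (fun _ => h) c)))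
      fun t ht => ih t ?_ _
    rw [Finset.mem_erase, Finset.mem_powerset] at ht
    have := Finset.card_lt_card (Finset.ssubset_iff_subset_ne.2 ⟨ht.2, ht.1⟩)
    omega

theorem isDeg_diag {k : ℕ} (A : ContinuousMultilinearMap ℝ (fun _ : Fin k => c0) Y) :
    IsDeg k (fun x => A fun _ => x) := by
  have := isDeg_piecewise A k Finset.univ (by simp) 0
  simpa using this

theorem bddMap_diag {k : ℕ} (A : ContinuousMultilinearMap ℝ (fun _ : Fin k => c0) Y) :
    BddMap (fun x => A fun _ => x) := by
  intro R
  refine ⟨‖A‖ * |R| ^ k, fun x hx => (A.le_opNorm _).trans ?_⟩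
  rw [Finset.prod_const, Finset.card_univ, Fintype.card_fin]
  gcongr
  exact hx.trans (le_abs_self R)

theorem unif_linear [CompleteSpace Y] (T : c0 →L[ℝ] Y) (h : GoodMap T) : UnifMap T := by
  refine unif_of_good 1 _ (fun v x y => by simp) (fun R => ?_) h
  refine ⟨‖T‖ * |R|, fun x hx => (T.le_opNorm x).trans ?_⟩
  gcongr
  exact hx.trans (le_abs_self R)

theorem compact_scale {E : Type*} [NormedAddCommGroup E] [NormedSpace ℝ E] {Q : E → Y} {k : ℕ}
    (hQ : ∀ (r : ℝ) x, Q (r • x) = r ^ k • Q x) (h : CompactMap Q) (R : ℝ) :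
    IsCompact (closure (Q '' closedBall 0 R)) := by
  have hK : IsCompact ((fun y : Y => (max R 1) ^ k • y) '' closure (Q '' closedBall 0 1)) :=
    IsCompact.image h (continuous_const_smul _)
  refine hK.of_isClosed_subset isClosed_closure (closure_minimal ?_ hK.isClosed)
  rintro _ ⟨x, hx, rfl⟩
  have hp : 0 < max R 1 := lt_of_lt_of_le one_pos (le_max_right _ _)
  refine ⟨Q ((max R 1)⁻¹ • x), subset_closure ⟨_, ?_, rfl⟩, ?_⟩
  · rw [mem_closedBall_zero_iff] at hx ⊢
    rw [norm_smul, norm_inv, Real.norm_of_nonneg hp.le, inv_mul_le_iff₀ hp, mul_one]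
    exact hx.trans (le_max_left _ _)
  · simp only
    rw [← hQ, smul_smul, mul_inv_cancel₀ hp.ne', one_smul]

theorem compact_mono {s t : Set Y} (ht : IsCompact (closure t)) (h : s ⊆ t) :
    IsCompact (closure s) :=
  ht.of_isClosed_subset isClosed_closure (closure_mono h)

end conseq

section equiv
variable {X : Type*} [NormedAddCommGroup X] [NormedSpace ℝ X]

theorem IsEquivC0Basis.norm_ge {x : ℕ → X} (h : IsEquivC0Basis x) :
    ∃ c : ℝ, 0 < c ∧ ∀ n, c ≤ ‖x n‖ := by
  obtain ⟨c, C, hc, -, h⟩ := h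
  refine ⟨c, hc, fun n => ?_⟩
  have h1 := (h (n + 1) (fun i => if i = n then 1 else 0)).1
  have h2 : ∑ i ∈ Finset.range (n + 1), (if i = n then (1 : ℝ) else 0) • x i = x n := by
    rw [Finset.sum_eq_single_of_mem n (by simp)]
    · simp
    · intro b _ hb
      simp [hb]
  rw [h2] at h1
  refine le_trans ?_ h1
  have h3 : (1 : ℝ) ≤ ⨆ i : Fin (n + 1), |if (i : ℕ) = n then (1 : ℝ) else 0| := by
    refine le_trans ?_ (le_ciSup (Set.finite_range _).bddAbove (Fin.last n))
    simp
  nlinarith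

theorem IsEquivC0Basis.not_summable {x : ℕ → X} (h : IsEquivC0Basis x) : ¬ Summable x := by
  intro hs
  obtain ⟨c, hc, h⟩ := h.norm_ge
  have h1 := hs.tendsto_atTop_zero.norm
  rw [norm_zero] at h1
  obtain ⟨n, hn⟩ := (h1.eventually_lt_const hc).exists
  exact absurd (h n) (not_le.2 hn)

theorem IsEquivC0Basis.wuc {x : ℕ → X} (h : IsEquivC0Basis x) : WUC x := by
  obtain ⟨c, C, hc, hcC, h⟩ := h
  refine WUC.of_bound C fun F => ?_
  have hF : F ⊆ Finset.range (F.sup id + 1) := fun i hi =>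
    Finset.mem_range.2 (Nat.lt_succ_of_le (Finset.le_sup (f := id) hi))
  have h1 := (h (F.sup id + 1) (fun i => if i ∈ F then 1 else 0)).2
  have h2 : ∑ i ∈ Finset.range (F.sup id + 1), (if i ∈ F then (1 : ℝ) else 0) • x i
      = ∑ i ∈ F, x i := by
    rw [← Finset.sum_subset hF]
    · refine Finset.sum_congr rfl fun i hi => by simp [hi]
    · intro i _ hi
      simp [hi]
  rw [h2] at h1
  refine h1.trans ?_
  have h3 : ⨆ i : Fin (F.sup id + 1), |if (i : ℕ) ∈ F then (1 : ℝ) else 0| ≤ 1 := by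
    refine ciSup_le fun i => ?_
    split_ifs <;> simp
  nlinarith

theorem c0_norm_sum (n : ℕ) (a : ℕ → ℝ) :
    ‖∑ i ∈ Finset.range n, a i • e i‖ = ⨆ i : Fin n, |a i| := by
  have hv : ∀ t, (∑ i ∈ Finset.range n, a i • e i) t = if t < n then a t else 0 := by
    intro t
    rw [c0_sum_apply]
    simp only [ZeroAtInftyContinuousMap.smul_apply, e_apply, smul_eq_mul, mul_ite, mul_one,
      mul_zero]
    rw [Finset.sum_ite_eq]
    simp
  refine le_antisymm ?_ ?_
  · refine (c0_norm_le (Real.iSup_nonneg fun i => abs_nonneg _)).2 fun t => ?_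
    rw [hv]
    split_ifs with ht
    · exact le_ciSup (f := fun i : Fin n => |a i|) (Set.finite_range _).bddAbove ⟨t, ht⟩
    · rw [abs_zero]
      exact Real.iSup_nonneg fun i => abs_nonneg _
  · refine Real.iSup_le (fun i => ?_) (norm_nonneg _)
    have := c0_abs_le (∑ i ∈ Finset.range n, a i • e i) i
    rwa [hv, if_pos i.2] at this

theorem isEquiv_of_emb (j : c0 →L[ℝ] X) {c : ℝ} (hc : 0 < c) (hj : ∀ z, c * ‖z‖ ≤ ‖j z‖) :
    IsEquivC0Basis fun n => j (e n) := by
  refine ⟨c, max c ‖j‖, hc, le_max_left _ _, fun n a => ?_⟩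
  have h1 : ∑ i ∈ Finset.range n, a i • j (e i) = j (∑ i ∈ Finset.range n, a i • e i) := by
    simp
  rw [h1, ← c0_norm_sum]
  refine ⟨hj _, (j.le_opNorm _).trans ?_⟩
  gcongr
  exact le_max_right _ _

end equiv

/-- Theorem (characterizations of Orlicz–Pettis polynomials). -/
theorem orlicz_pettis_tfae {X : Type u} {Y : Type v}
    [NormedAddCommGroup X] [NormedSpace ℝ X] [CompleteSpace X]
    [NormedAddCommGroup Y] [NormedSpace ℝ Y] [CompleteSpace Y]
    (k : ℕ) (hk : 1 ≤ k) (A : ContinuousMultilinearMap ℝ (fun _ : Fin k => X) Y)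
    (P : X → Y) (hP : P = fun x => A fun _ => x) :
    List.TFAE
      [ -- (A)
        ∀ x : ℕ → X, WUC x →
          (∀ a : ℕ → c0, (∃ M : ℝ, ∀ n, ‖a n‖ ≤ M) →
            RelWeakCompact (Set.range fun n => P (∑' i, a n i • x i))) →
          Summable x,
        -- (B)
        ∀ x : ℕ → X, WUC x →
          (∀ a : ℕ → c0, (∃ M : ℝ, ∀ n, ‖a n‖ ≤ M) →
            IsCompact (closure (Set.range fun n => P (∑' i, a n i • x i)))) →
          Summable x,
        -- (C)
        ∀ x : ℕ → X, IsEquivC0Basis x →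
          ∃ a : ℕ → c0, (∃ M : ℝ, ∀ n, ‖a n‖ ≤ M) ∧
            ¬ RelWeakCompact (Set.range fun n => P (∑' i, a n i • x i)),
        -- (D)
        ∀ x : ℕ → X, IsEquivC0Basis x →
          ∃ a : ℕ → c0, (∃ M : ℝ, ∀ n, ‖a n‖ ≤ M) ∧
            ¬ IsCompact (closure (Set.range fun n => P (∑' i, a n i • x i))),
        -- (E)
        ∀ (Z : Type w) [NormedAddCommGroup Z] [NormedSpace ℝ Z] [CompleteSpace Z]
          (T : Z →L[ℝ] X), UCPoly (fun z => P (T z)) → UCOp ⇑T,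
        -- (F)
        ∀ T : c0 →L[ℝ] X, CompactMap (fun z => P (T z)) → CompactMap ⇑T,
        -- (G)
        ∀ M : Submodule ℝ X, IsClosed (M : Set X) →
          (∃ j : c0 →L[ℝ] X, (∃ c : ℝ, 0 < c ∧ ∀ z, c * ‖z‖ ≤ ‖j z‖) ∧ ∀ z, j z ∈ M) →
          ¬ UCPoly (fun m : M => P (m : X)),
        -- (H)
        ∀ M : Submodule ℝ X, IsClosed (M : Set X) →
          (∃ j : c0 →L[ℝ] X, (∃ c : ℝ, 0 < c ∧ ∀ z, c * ‖z‖ ≤ ‖j z‖) ∧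
            Set.range ⇑j = (M : Set X)) →
          ¬ CompactMap (fun m : M => P (m : X)) ] := by
  have hPA : ∀ x, P x = A fun _ => x := fun x => by rw [hP]
  have hom : ∀ (r : ℝ) x, P (r • x) = r ^ k • P x := fun r x => by
    rw [hPA, hPA]
    have := A.map_smul_univ (fun _ => r) (fun _ => x)
    simpa using this
  clear hP
  let N : Prop := ∃ j : c0 →L[ℝ] X, (∃ c : ℝ, 0 < c ∧ ∀ z, c * ‖z‖ ≤ ‖j z‖) ∧
    UnifMap (fun z => P (j z))
  have hgood : ∀ j : c0 →L[ℝ] X, (∃ c : ℝ, 0 < c ∧ ∀ z, c * ‖z‖ ≤ ‖j z‖) →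
      GoodMap (fun z => P (j z)) → N := by
    intro j hj hg
    refine ⟨j, hj, ?_⟩
    let B := A.compContinuousLinearMap (fun _ => j)
    have hB : (fun z => P (j z)) = fun z => B fun _ => z := by
      funext z
      rw [hPA]
      rfl
    rw [hB] at hg ⊢
    exact unif_of_good k _ (isDeg_diag B) (bddMap_diag B) hg
  -- from `N` to a bad sequence
  have hND : N → ∃ x : ℕ → X, IsEquivC0Basis x ∧ ∀ a : ℕ → c0, (∃ M : ℝ, ∀ n, ‖a n‖ ≤ M) →
      IsCompact (closure (Set.range fun n => P (∑' i, a n i • x i))) := by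
    rintro ⟨j, ⟨c, hc, hj⟩, hu⟩
    refine ⟨fun n => j (e n), isEquiv_of_emb j hc hj, fun a ⟨M, hM⟩ => ?_⟩
    refine compact_mono (hu.compact M) ?_
    rintro _ ⟨n, rfl⟩
    refine ⟨a n, by simpa using hM n, ?_⟩
    simp only
    rw [clm_c0_apply j (a n)]
  have hAN : ∀ x : ℕ → X, WUC x → (∀ a : ℕ → c0, (∃ M : ℝ, ∀ n, ‖a n‖ ≤ M) →
      RelWeakCompact (Set.range fun n => P (∑' i, a n i • x i))) → ¬ Summable x → N := by
    intro x hx h hs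
    obtain ⟨S, c, hc, hS⟩ := exists_block_embedding (opc0 x hx) (by simpa only [opc0_e] using hs)
    refine hgood ((opc0 x hx).comp S) ⟨c, hc, hS⟩ (GoodMap.of_seq fun a ⟨M, hM⟩ => ?_)
    exact h (fun n => S (a n)) ⟨‖S‖ * M, fun n => (S.le_opNorm _).trans (by gcongr; exact hM n)⟩
  -- from a nonsummable image of a wuC series
  have hTN : ∀ (L : c0 →L[ℝ] X), (¬ Summable fun n => L (e n)) →
      (∀ S : c0 →L[ℝ] c0, GoodMap fun z => P (L (S z))) → N := by
    intro L hL h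
    obtain ⟨S, c, hc, hS⟩ := exists_block_embedding L hL
    exact hgood (L.comp S) ⟨c, hc, hS⟩ (h S)
  have hclosed : ∀ (j : c0 →L[ℝ] X) (c : ℝ), 0 < c → (∀ z, c * ‖z‖ ≤ ‖j z‖) →
      IsClosed ((LinearMap.range (j : c0 →ₗ[ℝ] X) : Submodule ℝ X) : Set X) := by
    intro j c hc hj
    have hanti : AntilipschitzWith (Real.toNNReal c⁻¹) j :=
      ContinuousLinearMap.antilipschitz_of_bound j fun z => by
        rw [Real.coe_toNNReal _ (by positivity), inv_mul_eq_div, le_div_iff₀ hc, mul_comm]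
        exact hj z
    have := (hanti.isClosedEmbedding j.uniformContinuous).isClosed_range
    have h2 : ((LinearMap.range (j : c0 →ₗ[ℝ] X) : Submodule ℝ X) : Set X) = Set.range j := rfl
    rw [h2]
    exact this
  refine List.tfae_of_forall (¬ N) _ ?_
  simp only [List.forall_mem_cons, List.not_mem_nil, false_imp_iff, implies_true, and_true]
  refine ⟨⟨?_, ?_⟩, ⟨?_, ?_⟩, ⟨?_, ?_⟩, ⟨?_, ?_⟩, ⟨?_, ?_⟩, ⟨?_, ?_⟩, ⟨?_, ?_⟩, ⟨?_, ?_⟩⟩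
  · intro h hN
    obtain ⟨x, hx, hxa⟩ := hND hN
    exact hx.not_summable (h x hx.wuc fun a ha => RelWeakCompact.of_compact (hxa a ha))
  · intro hN x hx h
    by_contra hs
    exact hN (hAN x hx h hs)
  · intro h hN
    obtain ⟨x, hx, hxa⟩ := hND hN
    exact hx.not_summable (h x hx.wuc hxa)
  · intro hN x hx h
    by_contra hs
    exact hN (hAN x hx (fun a ha => RelWeakCompact.of_compact (h a ha)) hs)
  · intro h hN
    obtain ⟨x, hx, hxa⟩ := hND hN
    obtain ⟨a, ha, hna⟩ := h x hx
    exact hna (RelWeakCompact.of_compact (hxa a ha))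
  · intro hN x hx
    by_contra hs
    push Not at hs
    exact hN (hAN x hx.wuc hs hx.not_summable)
  · intro h hN
    obtain ⟨x, hx, hxa⟩ := hND hN
    obtain ⟨a, ha, hna⟩ := h x hx
    exact hna (hxa a ha)
  · intro hN x hx
    by_contra hs
    push Not at hs
    exact hN (hAN x hx.wuc (fun a ha => RelWeakCompact.of_compact (hs a ha)) hx.not_summable)
  · -- (E) → ¬ N
    rintro h ⟨j, ⟨c, hc, hj⟩, hu⟩
    let U : ULift.{w, 0} c0 ≃L[ℝ] c0 := ContinuousLinearEquiv.ulift
    have h1 := h (ULift.{w, 0} c0) (j.comp (U : ULift.{w, 0} c0 →L[ℝ] c0))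
      (hu.ucPoly.comp (U : ULift.{w, 0} c0 →L[ℝ] c0))
    have h2 := h1 _ (wuc_e.map (U.symm : c0 →L[ℝ] ULift.{w, 0} c0))
    refine (isEquiv_of_emb j hc hj).not_summable ?_
    simpa using h2
  · intro hN Z _ _ _ T hT z hz
    by_contra hs
    refine hN (hTN (T.comp (opc0 z hz)) ?_ fun S => ?_)
    · simpa only [ContinuousLinearMap.comp_apply, opc0_e] using hs
    · exact GoodMap.of_ucPoly (hT.comp ((opc0 z hz).comp S))
  · -- (F) → ¬ N
    rintro h ⟨j, ⟨c, hc, hj⟩, hu⟩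
    have h1 : CompactMap j := h j (hu.compact 1)
    have h2 : UnifMap j := unif_linear j (GoodMap.of_ball fun R =>
      compact_scale (k := 1) (fun r x => by simp) h1 R)
    have he : ∀ n, ‖e n‖ ≤ 1 := fun n => (c0_norm_le zero_le_one).2 fun t => by
      rw [e_apply]; split_ifs <;> simp
    have h3 := h2 e (fun _ => 0) ⟨1, he⟩ ⟨0, fun _ => by simp⟩ (fun t => by
      refine tendsto_const_nhds.congr' ?_
      filter_upwards [eventually_gt_atTop t] with n hn
      simp [e_apply, hn.ne])
    obtain ⟨c', hc', hge⟩ := (isEquiv_of_emb j hc hj).norm_ge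
    have h4 := h3.norm
    simp only [map_zero, sub_zero, norm_zero] at h4
    obtain ⟨n, hn⟩ := (h4.eventually_lt_const hc').exists
    exact absurd (hge n) (not_le.2 hn)
  · intro hN T hT
    by_contra hnc
    have hnu : ¬ UCPoly T := fun hu =>
      hnc ((unif_linear T (GoodMap.of_ucPoly hu)).compact 1)
    unfold UCPoly at hnu
    push Not at hnu
    obtain ⟨z, hz, hzL⟩ := hnu
    have hs : ¬ Summable fun n => T (z n) := fun hs =>
      hzL _ (by simpa only [map_sum] using hs.hasSum.tendsto_sum_nat)
    refine hN (hTN (T.comp (opc0 z hz)) ?_ fun S => GoodMap.of_ball fun R => ?_)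
    · simpa only [ContinuousLinearMap.comp_apply, opc0_e] using hs
    · refine compact_mono (compact_scale (Q := fun z => P (T z)) (k := k)
        (fun r x => by simp only [map_smul, hom]) hT (‖(opc0 z hz).comp S‖ * R)) ?_
      rintro _ ⟨y, hy, rfl⟩
      refine ⟨((opc0 z hz).comp S) y, ?_, rfl⟩
      rw [mem_closedBall_zero_iff] at hy ⊢
      exact (ContinuousLinearMap.le_opNorm _ _).trans (by gcongr)
  · -- (G) → ¬ N
    rintro h ⟨j, ⟨c, hc, hj⟩, hu⟩
    refine h (LinearMap.range (j : c0 →ₗ[ℝ] X)) (hclosed j c hc hj)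
      ⟨j, ⟨c, hc, hj⟩, fun z => ⟨z, rfl⟩⟩ ?_
    intro m hm
    have hz : ∀ n, ∃ z : c0, j z = m n := fun n => (m n).2
    choose z hz using hz
    have hzw : WUC z := by
      obtain ⟨C, hC0, hC⟩ := hm.bound
      refine WUC.of_bound (c⁻¹ * C) fun F => ?_
      have h1 := norm_sum_le_of_bound hC hC0 F (fun _ => 1) zero_le_one (by simp)
      simp only [one_smul, mul_one] at h1
      rw [inv_mul_eq_div, le_div_iff₀ hc, mul_comm]
      refine (hj _).trans (le_trans (le_of_eq ?_) h1)
      rw [map_sum, Submodule.coe_norm, Submodule.coe_sum]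
      simp only [hz]
    obtain ⟨L, hL⟩ := hu.ucPoly z hzw
    refine ⟨L, hL.congr fun n => ?_⟩
    simp only
    rw [map_sum, Submodule.coe_sum]
    simp only [hz]
  · rintro hN M - ⟨j, hj, hjM⟩ hu
    refine hN (hgood j hj (GoodMap.of_ucPoly ?_))
    exact hu.comp (j.codRestrict M hjM)
  · -- (H) → ¬ N
    rintro h ⟨j, ⟨c, hc, hj⟩, hu⟩
    refine h (LinearMap.range (j : c0 →ₗ[ℝ] X)) (hclosed j c hc hj)
      ⟨j, ⟨c, hc, hj⟩, rfl⟩ ?_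
    refine compact_mono (hu.compact c⁻¹) ?_
    rintro _ ⟨⟨_, z, rfl⟩, hm, rfl⟩
    refine ⟨z, ?_, rfl⟩
    rw [mem_closedBall_zero_iff] at hm ⊢
    rw [inv_eq_one_div, le_div_iff₀ hc, mul_comm]
    exact (hj z).trans hm
  · rintro hN M - ⟨j, hj, hjM⟩ hK
    have hjM' : ∀ z, j z ∈ M := fun z => by
      have : j z ∈ Set.range j := ⟨z, rfl⟩
      rw [hjM] at this
      exact this
    refine hN (hgood j hj (GoodMap.of_ball fun R => ?_))
    refine compact_mono (compact_scale (Q := fun m : M => P (m : X)) (k := k)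
      (fun r x => by simp only [Submodule.coe_smul, hom]) hK (‖j‖ * R)) ?_
    rintro _ ⟨y, hy, rfl⟩
    refine ⟨⟨j y, hjM' y⟩, ?_, rfl⟩
    rw [mem_closedBall_zero_iff] at hy ⊢
    exact (j.le_opNorm y).trans (by gcongr)
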